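/- Define g : ℝ⁴ ∖ {0} → ℝ by g(x) = (1/(8π²))·( log(1/‖x‖) + ‖x‖²/2 − 1/2 ). Then g is smooth on ℝ⁴ ∖ {0}, it is biharmonic there, i.e. Δ(Δg)(x) = 0 for every x ≠ 0, and it satisfies the Dirichlet boundary conditions on the unit sphere: g(x) = 0 and the Fréchet derivative of g at x is the zero linear map, for every x with ‖x‖ = 1. -/

import Mathlib

noncomputable section

/-- The Laplacian of `f : ℝ⁴ → ℝ` at `x`: the trace of the second derivative. -/
def lap (f : EuclideanSpace ℝ (Fin 4) → ℝ) (x : EuclideanSpace ℝ (Fin 4)) : ℝ :=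
  ∑ i : Fin 4,
    fderiv ℝ (fun y => fderiv ℝ f y (EuclideanSpace.single i (1:ℝ))) x
      (EuclideanSpace.single i (1:ℝ))

/-!
In terms of `s = ‖x‖²`, the Laplacian of a radial function on an `n`-dimensional space is
`Δ (φ ∘ ‖·‖²) = 4 s φ'' + 2 n φ'`. Hence `Δ ‖x‖ ^ p = p (p + n - 2) ‖x‖ ^ (p - 2)` and
`Δ (log ‖x‖) = (n - 2) ‖x‖ ^ (-2)`, so that `Δ g` is an affine function of `‖x‖ ^ (-2)`, which is
harmonic for `n = 4`. The boundary conditions hold because both `g` and the factor `1 - ‖x‖⁻²` of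
its gradient vanish on the unit sphere.
-/

section CoordinateLaplacian

open Filter InnerProductSpace Laplacian Topology

lemma contDiffAt_laplacian {E F : Type*} [NormedAddCommGroup E] [InnerProductSpace ℝ E]
    [FiniteDimensional ℝ E] [NormedAddCommGroup F] [NormedSpace ℝ F] {f : E → F} {x : E}
    {m n : WithTop ℕ∞} (hf : ContDiffAt ℝ n f x) (hmn : m + 2 ≤ n) : ContDiffAt ℝ m (Δ f) x := by
  rw [laplacian_eq_iteratedFDeriv_stdOrthonormalBasis]
  exact ContDiffAt.sum fun i _ =>
    (ContinuousMultilinearMap.apply ℝ (fun _ : Fin 2 => E) F _).contDiff.contDiffAt.comp x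
      (hf.iteratedFDeriv_right (i := 2) hmn)

variable {f : EuclideanSpace ℝ (Fin 4) → ℝ} {x : EuclideanSpace ℝ (Fin 4)}

lemma lap_eq_laplacian (hf : ContDiffAt ℝ 2 f x) : lap f x = Δ f x := by
  have hf' : DifferentiableAt ℝ (fderiv ℝ f) x :=
    (hf.fderiv_right (m := 1) (by norm_num)).differentiableAt one_ne_zero
  simp [lap, laplacian_eq_iteratedFDeriv_orthonormalBasis f (EuclideanSpace.basisFun (Fin 4) ℝ),
    iteratedFDeriv_two_apply, fderiv_clm_apply hf' (differentiableAt_const _)]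

lemma lap_lap_eq_laplacian_laplacian (hf : ContDiffAt ℝ 4 f x) : lap (lap f) x = Δ (Δ f) x := by
  have lap_eq : lap f =ᶠ[𝓝 x] Δ f := by
    filter_upwards [(hf.of_le (m := 2) (by norm_num)).eventually (by simp)] with y hy
    exact lap_eq_laplacian hy
  have lap_contDiffAt : ContDiffAt ℝ 2 (lap f) x :=
    (contDiffAt_laplacian hf (by norm_num)).congr_of_eventuallyEq lap_eq
  rw [lap_eq_laplacian lap_contDiffAt, (laplacian_congr_nhds lap_eq).eq_of_nhds]

end CoordinateLaplacian

section Radial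

open Filter InnerProductSpace Laplacian Module Topology
open scoped ContDiff RealInnerProductSpace

variable {E : Type*} [NormedAddCommGroup E] {x : E}

/-- The function `g` of the theorem, on an arbitrary normed space. The constant
`1 / (8 * π ^ 2)` normalises it as a Green function of the bilaplacian in dimension four only. -/
def bilaplacianGreen (x : E) : ℝ :=
  (1 / (8 * Real.pi ^ 2)) * (Real.log (1 / ‖x‖) + ‖x‖ ^ 2 / 2 - 1 / 2)

lemma bilaplacianGreen_eq_zero_of_norm_eq_one (hx : ‖x‖ = 1) : bilaplacianGreen x = 0 := by
  simp [bilaplacianGreen, hx]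

lemma log_norm_eq_log_norm_sq_div_two (x : E) : Real.log ‖x‖ = Real.log (‖x‖ ^ 2) / 2 := by
  rw [Real.log_pow]
  push_cast
  ring

lemma norm_rpow_eq_norm_sq_rpow (x : E) (p : ℝ) : ‖x‖ ^ p = (‖x‖ ^ 2) ^ (p / 2) := by
  rw [← Real.rpow_natCast_mul (norm_nonneg x)]
  congr 1
  push_cast
  ring

variable [InnerProductSpace ℝ E]

section Calculus

variable {φ φ' : ℝ → ℝ} {φ'' : ℝ}

lemma hasFDerivAt_comp_norm_sq {a : ℝ} (hφ : HasDerivAt φ a (‖x‖ ^ 2)) :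
    HasFDerivAt (fun y : E => φ (‖y‖ ^ 2)) ((2 * a) • innerSL ℝ x) x := by
  refine (hφ.comp_hasFDerivAt x (hasStrictFDerivAt_norm_sq x).hasFDerivAt).congr_fderiv ?_
  rw [smul_comm, ← Nat.cast_smul_eq_nsmul ℝ, smul_smul, Nat.cast_two]

lemma fderiv_fderiv_comp_norm_sq_apply (hφ : ∀ᶠ s in 𝓝 (‖x‖ ^ 2), HasDerivAt φ (φ' s) s)
    (hφ' : HasDerivAt φ' φ'' (‖x‖ ^ 2)) (v w : E) :
    fderiv ℝ (fderiv ℝ fun y : E => φ (‖y‖ ^ 2)) x v w =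
      4 * φ'' * ⟪x, v⟫ * ⟪x, w⟫ + 2 * φ' (‖x‖ ^ 2) * ⟪v, w⟫ := by
  -- `innerSL ℝ` is conjugate-linear by type, so the product rule needs this retyping.
  let innerBilin : E →L[ℝ] E →L[ℝ] ℝ := innerSL ℝ
  have innerBilin_apply (y z : E) : innerBilin y z = ⟪y, z⟫ := rfl
  have gradient : (fderiv ℝ fun y : E => φ (‖y‖ ^ 2)) =ᶠ[𝓝 x]
      fun y => (2 * φ' (‖y‖ ^ 2)) • innerBilin y := by
    have norm_sq_tendsto : Tendsto (fun y : E => ‖y‖ ^ 2) (𝓝 x) (𝓝 (‖x‖ ^ 2)) :=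
      (continuous_norm.pow 2).tendsto x
    filter_upwards [norm_sq_tendsto.eventually hφ] with y hy
    exact (hasFDerivAt_comp_norm_sq hy).fderiv
  have product_rule :=
    ((hasFDerivAt_comp_norm_sq hφ').const_mul 2).fun_smul innerBilin.hasFDerivAt
  rw [gradient.fderiv_eq, product_rule.fderiv]
  simp only [add_apply, smul_apply, ContinuousLinearMap.smulRight_apply, coe_innerSL_apply,
    smul_eq_mul, innerBilin_apply]
  ring

lemma laplacian_comp_norm_sq [FiniteDimensional ℝ E]
    (hφ : ∀ᶠ s in 𝓝 (‖x‖ ^ 2), HasDerivAt φ (φ' s) s) (hφ' : HasDerivAt φ' φ'' (‖x‖ ^ 2)) :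
    Δ (fun y : E => φ (‖y‖ ^ 2)) x =
      4 * ‖x‖ ^ 2 * φ'' + 2 * finrank ℝ E * φ' (‖x‖ ^ 2) := by
  let b := stdOrthonormalBasis ℝ E
  have second_derivative (i : Fin (finrank ℝ E)) :
      iteratedFDeriv ℝ 2 (fun y : E => φ (‖y‖ ^ 2)) x ![b i, b i] =
        4 * φ'' * ⟪x, b i⟫ ^ 2 + 2 * φ' (‖x‖ ^ 2) := by
    simp only [iteratedFDeriv_two_apply, Matrix.cons_val_zero, Matrix.cons_val_one,
      Matrix.cons_val_fin_one, fderiv_fderiv_comp_norm_sq_apply hφ hφ',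
      real_inner_self_eq_norm_sq, b.norm_eq_one]
    ring
  simp only [laplacian_eq_iteratedFDeriv_orthonormalBasis _ b, second_derivative,
    Finset.sum_add_distrib, ← Finset.mul_sum, b.sum_sq_inner_left, Finset.sum_const,
    Finset.card_univ, Fintype.card_fin, nsmul_eq_mul]
  ring

end Calculus

lemma contDiffAt_log_norm {n : WithTop ℕ∞} (hx : x ≠ 0) :
    ContDiffAt ℝ n (fun y : E => Real.log ‖y‖) x :=
  (contDiffAt_norm ℝ hx).log (norm_ne_zero_iff.mpr hx)

lemma contDiffAt_norm_rpow_of_ne {n : WithTop ℕ∞} (hx : x ≠ 0) (p : ℝ) :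
    ContDiffAt ℝ n (fun y : E => ‖y‖ ^ p) x :=
  (contDiffAt_norm ℝ hx).rpow_const_of_ne (norm_ne_zero_iff.mpr hx)

lemma hasFDerivAt_log_norm (hx : x ≠ 0) :
    HasFDerivAt (fun y : E => Real.log ‖y‖) ((‖x‖ ^ 2)⁻¹ • innerSL ℝ x) x := by
  have hs : ‖x‖ ^ 2 ≠ 0 := by positivity
  simp_rw [log_norm_eq_log_norm_sq_div_two]
  refine (hasFDerivAt_comp_norm_sq ((Real.hasDerivAt_log hs).div_const 2)).congr_fderiv ?_
  rw [mul_div_cancel₀ _ two_ne_zero]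

theorem laplacian_log_norm [FiniteDimensional ℝ E] (hx : x ≠ 0) :
    Δ (fun y : E => Real.log ‖y‖) x = (finrank ℝ E - 2) * ‖x‖ ^ (-2 : ℝ) := by
  have hs : ‖x‖ ^ 2 ≠ 0 := by positivity
  have hφ : ∀ᶠ s in 𝓝 (‖x‖ ^ 2), HasDerivAt (fun s => Real.log s / 2) (s⁻¹ / 2) s := by
    filter_upwards [eventually_ne_nhds hs] with s hs
    exact (Real.hasDerivAt_log hs).div_const 2
  simp_rw [log_norm_eq_log_norm_sq_div_two]
  rw [laplacian_comp_norm_sq hφ ((hasDerivAt_inv hs).div_const 2),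
    Real.rpow_neg (norm_nonneg x), Real.rpow_two]
  field_simp
  ring

theorem laplacian_norm_sq [FiniteDimensional ℝ E] (x : E) :
    Δ (fun y : E => ‖y‖ ^ 2) x = 2 * finrank ℝ E := by
  simpa using laplacian_comp_norm_sq (.of_forall hasDerivAt_id) (hasDerivAt_const (‖x‖ ^ 2) 1)

theorem laplacian_norm_rpow [FiniteDimensional ℝ E] (hx : x ≠ 0) (p : ℝ) :
    Δ (fun y : E => ‖y‖ ^ p) x = p * (p + finrank ℝ E - 2) * ‖x‖ ^ (p - 2) := by
  have hs : ‖x‖ ^ 2 ≠ 0 := by positivity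
  have hφ : ∀ᶠ s in 𝓝 (‖x‖ ^ 2), HasDerivAt (fun s => s ^ (p / 2)) (p / 2 * s ^ (p / 2 - 1)) s := by
    filter_upwards [eventually_ne_nhds hs] with s hs
    exact Real.hasDerivAt_rpow_const (.inl hs)
  have hφ' := (Real.hasDerivAt_rpow_const (p := p / 2 - 1) (.inl hs)).const_mul (p / 2)
  simp_rw [norm_rpow_eq_norm_sq_rpow]
  rw [laplacian_comp_norm_sq hφ hφ', Real.rpow_sub_one hs (p / 2 - 1),
    show (p - 2) / 2 = p / 2 - 1 by ring]
  field_simp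
  ring

lemma contDiffAt_bilaplacianGreen {n : WithTop ℕ∞} (hx : x ≠ 0) :
    ContDiffAt ℝ n (bilaplacianGreen : E → ℝ) x := by
  unfold bilaplacianGreen
  simp only [one_div, Real.log_inv]
  exact contDiffAt_const.mul (((contDiffAt_log_norm hx).neg.add
    ((contDiff_norm_sq ℝ).contDiffAt.div_const 2)).sub contDiffAt_const)

lemma hasFDerivAt_bilaplacianGreen (hx : x ≠ 0) :
    HasFDerivAt (bilaplacianGreen : E → ℝ)
      ((1 / (8 * Real.pi ^ 2) * (1 - (‖x‖ ^ 2)⁻¹)) • innerSL ℝ x) x := by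
  unfold bilaplacianGreen
  simp only [one_div, Real.log_inv]
  have norm_sq_half := hasFDerivAt_comp_norm_sq ((hasDerivAt_id (‖x‖ ^ 2)).div_const 2)
  refine ((((hasFDerivAt_log_norm hx).neg.add norm_sq_half).sub_const 2⁻¹).const_mul
    (8 * Real.pi ^ 2)⁻¹).congr_fderiv ?_
  module

lemma fderiv_bilaplacianGreen_eq_zero_of_norm_eq_one (hx : ‖x‖ = 1) :
    fderiv ℝ (bilaplacianGreen : E → ℝ) x = 0 := by
  have x_ne_zero : x ≠ 0 := norm_ne_zero_iff.mp (hx ▸ one_ne_zero)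
  simp [(hasFDerivAt_bilaplacianGreen x_ne_zero).fderiv, hx]

variable [FiniteDimensional ℝ E]

lemma laplacian_bilaplacianGreen (hx : x ≠ 0) :
    Δ (bilaplacianGreen : E → ℝ) x =
      1 / (8 * Real.pi ^ 2) * (finrank ℝ E - (finrank ℝ E - 2) * ‖x‖ ^ (-2 : ℝ)) := by
  let log_norm : E → ℝ := fun y => Real.log ‖y‖
  let norm_sq : E → ℝ := fun y => ‖y‖ ^ 2
  have green_eq : (bilaplacianGreen : E → ℝ) =
      (1 / (8 * Real.pi ^ 2)) • ((1 / 2 : ℝ) • norm_sq - log_norm - fun _ => 1 / 2) := by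
    ext y
    simp only [bilaplacianGreen, one_div, Real.log_inv, Pi.smul_apply, Pi.sub_apply, smul_eq_mul,
      norm_sq, log_norm]
    ring
  have hlog : ContDiffAt ℝ 2 log_norm x := contDiffAt_log_norm hx
  have hsq : ContDiffAt ℝ 2 norm_sq x := (contDiff_norm_sq ℝ).contDiffAt
  have hhalf : ContDiffAt ℝ 2 ((1 / 2 : ℝ) • norm_sq) x := hsq.const_smul (1 / 2 : ℝ)
  have hdiff : ContDiffAt ℝ 2 ((1 / 2 : ℝ) • norm_sq - log_norm) x := hhalf.sub hlog
  have hconst : ContDiffAt ℝ 2 (fun _ : E => (1 / 2 : ℝ)) x := contDiffAt_const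
  have hbracket : ContDiffAt ℝ 2 ((1 / 2 : ℝ) • norm_sq - log_norm - fun _ => 1 / 2) x :=
    hdiff.sub hconst
  have laplacian_log : Δ log_norm x = (finrank ℝ E - 2) * ‖x‖ ^ (-2 : ℝ) := laplacian_log_norm hx
  have laplacian_sq : Δ norm_sq x = 2 * finrank ℝ E := laplacian_norm_sq x
  rw [green_eq, laplacian_smul _ hbracket, hdiff.laplacian_sub hconst,
    hhalf.laplacian_sub hlog, laplacian_smul _ hsq, laplacian_sq, laplacian_log, laplacian_const]
  simp

theorem laplacian_laplacian_bilaplacianGreen (hx : x ≠ 0) :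
    Δ (Δ (bilaplacianGreen : E → ℝ)) x =
      1 / (8 * Real.pi ^ 2) * (2 * (finrank ℝ E - 2) * (finrank ℝ E - 4) * ‖x‖ ^ (-4 : ℝ)) := by
  let c : ℝ := 1 / (8 * Real.pi ^ 2)
  have laplacian_eq : Δ (bilaplacianGreen : E → ℝ) =ᶠ[𝓝 x]
      (fun _ => c * finrank ℝ E) - (c * (finrank ℝ E - 2)) • fun y => ‖y‖ ^ (-2 : ℝ) := by
    filter_upwards [eventually_ne_nhds hx] with y hy
    simp only [laplacian_bilaplacianGreen hy, Pi.sub_apply, Pi.smul_apply, smul_eq_mul, c]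
    ring
  have hpow : ContDiffAt ℝ 2 (fun y : E => ‖y‖ ^ (-2 : ℝ)) x := contDiffAt_norm_rpow_of_ne hx _
  have hsmul : ContDiffAt ℝ 2 ((c * (finrank ℝ E - 2)) • fun y : E => ‖y‖ ^ (-2 : ℝ)) x :=
    hpow.const_smul (c * (finrank ℝ E - 2))
  rw [(laplacian_congr_nhds laplacian_eq).eq_of_nhds,
    contDiffAt_const.laplacian_sub hsmul, laplacian_smul _ hpow,
    laplacian_norm_rpow hx, laplacian_const, show (-2 - 2 : ℝ) = -4 by norm_num]
  simp only [Pi.zero_apply, smul_eq_mul, c]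
  ring

theorem green_pole_origin_general :
    ContDiffOn ℝ ω (bilaplacianGreen : E → ℝ) {0}ᶜ ∧
    (∀ x : E, x ≠ 0 → Δ (Δ (bilaplacianGreen : E → ℝ)) x =
      1 / (8 * Real.pi ^ 2) * (2 * (finrank ℝ E - 2) * (finrank ℝ E - 4) * ‖x‖ ^ (-4 : ℝ))) ∧
    (∀ x : E, ‖x‖ = 1 →
      bilaplacianGreen x = 0 ∧ fderiv ℝ (bilaplacianGreen : E → ℝ) x = 0) :=
  ⟨fun _ hx => (contDiffAt_bilaplacianGreen hx).contDiffWithinAt,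
    fun _ hx => laplacian_laplacian_bilaplacianGreen hx,
    fun _ hx => ⟨bilaplacianGreen_eq_zero_of_norm_eq_one hx,
      fderiv_bilaplacianGreen_eq_zero_of_norm_eq_one hx⟩⟩

end Radial

/-- The Green function of the bilaplacian of the unit ball with pole at the origin,
`g(x) = (1/(8π²))( log(1/‖x‖) + ‖x‖²/2 − 1/2 )`: it is smooth away from `0`, biharmonic
away from `0`, and satisfies the Dirichlet boundary conditions on the unit sphere. -/
theorem green_pole_origin :
    ContDiffOn ℝ (⊤ : ℕ∞)
      (fun x : EuclideanSpace ℝ (Fin 4) =>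
        (1 / (8 * Real.pi ^ 2)) * (Real.log (1 / ‖x‖) + ‖x‖ ^ 2 / 2 - 1 / 2))
      {(0 : EuclideanSpace ℝ (Fin 4))}ᶜ ∧
    (∀ x : EuclideanSpace ℝ (Fin 4), x ≠ 0 →
      lap (lap (fun x : EuclideanSpace ℝ (Fin 4) =>
        (1 / (8 * Real.pi ^ 2)) * (Real.log (1 / ‖x‖) + ‖x‖ ^ 2 / 2 - 1 / 2))) x = 0) ∧
    (∀ x : EuclideanSpace ℝ (Fin 4), ‖x‖ = 1 →
      (1 / (8 * Real.pi ^ 2)) * (Real.log (1 / ‖x‖) + ‖x‖ ^ 2 / 2 - 1 / 2) = 0 ∧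
      fderiv ℝ
        (fun x : EuclideanSpace ℝ (Fin 4) =>
          (1 / (8 * Real.pi ^ 2)) * (Real.log (1 / ‖x‖) + ‖x‖ ^ 2 / 2 - 1 / 2)) x = 0) := by
  obtain ⟨smooth, biharmonic, dirichlet⟩ :=
    green_pole_origin_general (E := EuclideanSpace ℝ (Fin 4))
  refine ⟨smooth.of_le le_top, fun x hx => ?_, dirichlet⟩
  exact (lap_lap_eq_laplacian_laplacian (contDiffAt_bilaplacianGreen hx)).trans
    ((biharmonic x hx).trans (by simp))

end
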